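/- arXiv:2404.10592 — 3 statements merged into one kernel-verified Lean document; each statement's English description precedes it below -/
import Mathlib

section
/- Let the symmetric group S₂ act on K[X,Y,W] by exchanging X and Y and acting on W through the sign character (the transposition sends W ↦ −W), with char K ≠ 2. Then the invariant ring is K[X+Y, XY, W², (X−Y)W], and it is isomorphic to K[A,B,U,V]/(V² − U(A² − 4B)). -/
/-!
Write `A, B, U, V` for the four generators, also for the variables mapped to them. Both halves
reduce a polynomial to a form on which changing the sign of `W` or of `X − Y` can be read off.

* With `D = X − Y`, the identities `2X = A + D`, `2Y = A − D`, `D² = A² − 4B`, `W² = U` and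
  `DW = V` show that every `f ∈ K[X,Y,W]` is `p + D q + W r` with `p, q, r` in the subalgebra
  generated by `A, B, U, V` (`exists_decomp`). The transposition `σ` fixes `p, q, r` and negates `D`
  and `W`, so `f + σ f = 2 p`; an invariant `f` is therefore equal to `p`.
* Modulo `V² − U(A² − 4B)` every polynomial is `g₀(A,B,U) + V g₁(A,B,U)`
  (`exists_normal_form`). Over an algebraic closure every point `(a, b, u)` has the form
  `(x + y, xy, w²)`. If the normal form is in the kernel, comparing its values at `(x, y, w)` and
  `(x, y, −w)` shows that `g₀` and `U(A² − 4B) g₁` vanish at every point, so both are zero, and then `g₁ = 0`.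
-/

open MvPolynomial

/-- `K[X,Y,W]` is generated by `1, X − Y, W` as a module over a subalgebra `S` containing
`X + Y, XY, W², (X − Y)W`. -/
lemma exists_decomp {K : Type*} [Field K] (h2 : (2 : K) ≠ 0)
    (S : Subalgebra K (MvPolynomial (Fin 3) K))
    (hA : X 0 + X 1 ∈ S) (hB : X 0 * X 1 ∈ S) (hU : X 2 ^ 2 ∈ S)
    (hV : (X 0 - X 1) * X 2 ∈ S) (f : MvPolynomial (Fin 3) K) :
    ∃ p ∈ S, ∃ q ∈ S, ∃ r ∈ S, f = p + (X 0 - X 1) * q + X 2 * r := by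
  have hc : (2 : MvPolynomial (Fin 3) K) * C (2⁻¹ : K) = 1 := by
    rw [← map_ofNat (C : K →+* MvPolynomial (Fin 3) K) 2, ← C_mul, mul_inv_cancel₀ h2, C_1]
  have hcS : C (2⁻¹ : K) ∈ S := S.algebraMap_mem _
  have hD : (X 0 + X 1) ^ 2 - 4 * (X 0 * X 1) ∈ S :=
    sub_mem (pow_mem hA 2) (mul_mem (ofNat_mem S 4) hB)
  generalize C (2⁻¹ : K) = c at hc hcS
  induction f using MvPolynomial.induction_on with
  | C a => exact ⟨C a, S.algebraMap_mem a, 0, zero_mem _, 0, zero_mem _, by ring⟩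
  | add f g hf hg =>
    obtain ⟨p, hp, q, hq, r, hr, rfl⟩ := hf
    obtain ⟨p', hp', q', hq', r', hr', rfl⟩ := hg
    exact ⟨_, add_mem hp hp', _, add_mem hq hq', _, add_mem hr hr', by ring⟩
  | mul_X f i hf =>
    obtain ⟨p, hp, q, hq, r, hr, rfl⟩ := hf
    fin_cases i
    · refine ⟨c * ((X 0 + X 1) * p + ((X 0 + X 1) ^ 2 - 4 * (X 0 * X 1)) * q
          + ((X 0 - X 1) * X 2) * r), mul_mem hcS (add_mem (add_mem (mul_mem hA hp)
            (mul_mem hD hq)) (mul_mem hV hr)),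
        c * (p + (X 0 + X 1) * q), mul_mem hcS (add_mem hp (mul_mem hA hq)),
        c * ((X 0 + X 1) * r), mul_mem hcS (mul_mem hA hr), ?_⟩
      simp only [Fin.zero_eta, Fin.isValue]
      linear_combination (-(p + (X 0 - X 1) * q + X 2 * r) * X 0) * hc
    · refine ⟨c * ((X 0 + X 1) * p - ((X 0 + X 1) ^ 2 - 4 * (X 0 * X 1)) * q
          - ((X 0 - X 1) * X 2) * r), mul_mem hcS (sub_mem (sub_mem (mul_mem hA hp)
            (mul_mem hD hq)) (mul_mem hV hr)),
        c * ((X 0 + X 1) * q - p), mul_mem hcS (sub_mem (mul_mem hA hq) hp),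
        c * ((X 0 + X 1) * r), mul_mem hcS (mul_mem hA hr), ?_⟩
      simp only [Fin.mk_one, Fin.isValue]
      linear_combination (-(p + (X 0 - X 1) * q + X 2 * r) * X 1) * hc
    · refine ⟨(X 0 - X 1) * X 2 * q + X 2 ^ 2 * r, add_mem (mul_mem hV hq) (mul_mem hU hr),
        0, zero_mem _, p, hp, ?_⟩
      simp only [Fin.reduceFinMk, Fin.isValue]
      ring

/-- Division by `V² − U(A² − 4B)`, monic in `V`; `rename Fin.castSucc` is the inclusion
`K[A,B,U] → K[A,B,U,V]`. -/
lemma exists_normal_form {K : Type*} [Field K] (f : MvPolynomial (Fin 4) K) :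
    ∃ g h : MvPolynomial (Fin 3) K, ∃ k : MvPolynomial (Fin 4) K,
      f = rename Fin.castSucc g + X 3 * rename Fin.castSucc h
        + (X 3 ^ 2 - X 2 * (X 0 ^ 2 - 4 * X 1)) * k := by
  induction f using MvPolynomial.induction_on with
  | C a => exact ⟨C a, 0, 0, by simp⟩
  | add f g hf hg =>
    obtain ⟨p, q, k, rfl⟩ := hf
    obtain ⟨p', q', k', rfl⟩ := hg
    exact ⟨p + p', q + q', k + k', by simp only [map_add]; ring⟩
  | mul_X f i hf =>
    obtain ⟨p, q, k, rfl⟩ := hf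
    induction i using Fin.lastCases with
    | cast i =>
      exact ⟨p * X i, q * X i, k * X i.castSucc, by simp only [map_mul, rename_X]; ring⟩
    | last =>
      refine ⟨X 2 * (X 0 ^ 2 - 4 * X 1) * q, p, k * X 3 + rename Fin.castSucc q, ?_⟩
      simp only [map_mul, map_sub, map_pow, rename_X, map_ofNat]
      simp only [Fin.reduceLast, Fin.reduceCastSucc, Fin.isValue, Fin.castSucc_zero,
        Fin.castSucc_one]
      ring

/-- A polynomial vanishing on the affine space over an algebraic closure is zero. -/
lemma eq_zero_of_forall_aeval {K : Type*} [Field K] (g : MvPolynomial (Fin 3) K)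
    (h : ∀ a b u : AlgebraicClosure K, aeval ![a, b, u] g = 0) : g = 0 := by
  apply map_injective _ (algebraMap K (AlgebraicClosure K)).injective
  rw [map_zero]
  apply MvPolynomial.funext
  intro x
  have hx : ![x 0, x 1, x 2] = x := by ext i; fin_cases i <;> rfl
  rw [map_zero, eval_map, ← aeval_def, ← hx]
  exact h _ _ _

/-- A normal form `g + V h` in the kernel of the substitution is trivial. -/
lemma normal_form_unique {K : Type*} [Field K] (h2 : (2 : K) ≠ 0)
    (g h : MvPolynomial (Fin 3) K)
    (H : aeval ![(X 0 + X 1 : MvPolynomial (Fin 3) K), X 0 * X 1, X 2 ^ 2, (X 0 - X 1) * X 2]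
      (rename Fin.castSucc g + X 3 * rename Fin.castSucc h : MvPolynomial (Fin 4) K) = 0) :
    g = 0 ∧ h = 0 := by
  have h2' : (2 : AlgebraicClosure K) ≠ 0 := by
    have := (map_ne_zero (algebraMap K (AlgebraicClosure K))).2 h2
    rwa [map_ofNat] at this
  have key : ∀ x y w : AlgebraicClosure K,
      aeval ![x + y, x * y, w ^ 2] g + (x - y) * w * aeval ![x + y, x * y, w ^ 2] h = 0 := by
    intro x y w
    have e := congrArg (aeval ![x, y, w]) H
    rw [← AlgHom.comp_apply, comp_aeval] at e
    have e1 : (fun i => (aeval ![x, y, w]) (![(X 0 + X 1 : MvPolynomial (Fin 3) K), X 0 * X 1,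
        X 2 ^ 2, (X 0 - X 1) * X 2] i)) = ![x + y, x * y, w ^ 2, (x - y) * w] := by
      ext i; fin_cases i <;> simp
    have e2 : (![x + y, x * y, w ^ 2, (x - y) * w] ∘ Fin.castSucc) = ![x + y, x * y, w ^ 2] := by
      ext i; fin_cases i <;> rfl
    rw [e1, map_add, map_mul, aeval_rename, aeval_rename, e2, aeval_X, map_zero] at e
    exact e
  have surj : ∀ a b u : AlgebraicClosure K, ∃ x y w, x + y = a ∧ x * y = b ∧ w ^ 2 = u := by
    intro a b u
    obtain ⟨d, hd⟩ := IsAlgClosed.exists_pow_nat_eq (a ^ 2 - 4 * b) two_pos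
    obtain ⟨w, hw⟩ := IsAlgClosed.exists_pow_nat_eq u two_pos
    refine ⟨(a + d) / 2, (a - d) / 2, w, by field_simp; ring, ?_, hw⟩
    field_simp
    linear_combination -hd
  constructor
  · refine eq_zero_of_forall_aeval g fun a b u => ?_
    obtain ⟨x, y, w, rfl, rfl, rfl⟩ := surj a b u
    -- replacing `w` by `-w` keeps the point `(a, b, u)` and negates the value of `V`
    have k1 := key x y w
    have k2 := key x y (-w)
    rw [neg_sq] at k2
    refine (mul_eq_zero.1 ?_).resolve_left h2'
    linear_combination k1 + k2
  · have hz : X 2 * (X 0 ^ 2 - 4 * X 1) * h = 0 := by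
      refine eq_zero_of_forall_aeval _ fun a b u => ?_
      obtain ⟨x, y, w, rfl, rfl, rfl⟩ := surj a b u
      have k1 := key x y w
      have k2 := key x y (-w)
      rw [neg_sq] at k2
      refine (mul_eq_zero.1 ?_).resolve_left h2'
      simp only [map_mul, map_sub, map_pow, map_ofNat, aeval_X, Matrix.cons_val]
      linear_combination ((x - y) * w) * (k1 - k2)
    refine (mul_eq_zero.1 hz).resolve_left fun h0 => ?_
    simpa using congrArg (eval ![1, 0, 1]) h0

/-- `S₂` acts on `K[X,Y,W]` (char `K ≠ 2`): the transposition swaps `X` and `Y` and negates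
`W` (sign character). The invariant ring is `K[X+Y, XY, W², (X−Y)W]`, and the map
`K[A,B,U,V] → K[X,Y,W]`, `A ↦ X+Y, B ↦ XY, U ↦ W², V ↦ (X−Y)W`, has kernel
`(V² − U(A² − 4B))`; hence the invariant ring is isomorphic to
`K[A,B,U,V]/(V² − U(A² − 4B))`. -/
theorem stmt6 {K : Type*} [Field K] (h2 : (-1 : K) ≠ 1) :
    ({f : MvPolynomial (Fin 3) K | aeval ![X 1, X 0, -X 2] f = f} =
      ↑(Algebra.adjoin K
        {(X 0 + X 1 : MvPolynomial (Fin 3) K), X 0 * X 1, X 2 ^ 2,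
          (X 0 - X 1) * X 2})) ∧
    RingHom.ker (aeval ![(X 0 + X 1 : MvPolynomial (Fin 3) K), X 0 * X 1, X 2 ^ 2,
          (X 0 - X 1) * X 2] : MvPolynomial (Fin 4) K →ₐ[K] MvPolynomial (Fin 3) K) =
      Ideal.span {(X 3 ^ 2 - X 2 * (X 0 ^ 2 - 4 * X 1) : MvPolynomial (Fin 4) K)} := by
  have h2' : (2 : K) ≠ 0 := fun h => h2 (by linear_combination -h)
  refine ⟨?_, ?_⟩
  · set S := Algebra.adjoin K
        {(X 0 + X 1 : MvPolynomial (Fin 3) K), X 0 * X 1, X 2 ^ 2, (X 0 - X 1) * X 2} with hS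
    have hfix : ∀ p ∈ S, aeval ![X 1, X 0, -X 2] p = p := by
      intro p hp
      have hle : S ≤ AlgHom.equalizer
          (aeval ![X 1, X 0, -X 2] : MvPolynomial (Fin 3) K →ₐ[K] MvPolynomial (Fin 3) K)
          (AlgHom.id K _) := by
        refine Algebra.adjoin_le ?_
        rintro _ (rfl | rfl | rfl | rfl) <;> simp <;> ring
      exact hle hp
    ext f
    refine ⟨fun hf => ?_, hfix f⟩
    obtain ⟨p, hp, q, hq, r, hr, rfl⟩ := exists_decomp h2' S
      (Algebra.subset_adjoin (by simp)) (Algebra.subset_adjoin (by simp))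
      (Algebra.subset_adjoin (by simp)) (Algebra.subset_adjoin (by simp)) f
    simp only [Set.mem_ofPred_eq, map_add, map_mul, map_sub, hfix p hp, hfix q hq, hfix r hr,
      aeval_X, Matrix.cons_val] at hf
    -- `hf` says that this element equals its own negative
    have hz : (X 0 - X 1) * q + X 2 * r = 0 := by
      have h2P : (2 : MvPolynomial (Fin 3) K) ≠ 0 := by
        rw [← map_ofNat (C : K →+* MvPolynomial (Fin 3) K) 2]
        exact (map_ne_zero_iff _ (C_injective _ _)).2 h2'
      refine (mul_eq_zero.1 ?_).resolve_left h2P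
      linear_combination -hf
    rw [add_assoc, hz, add_zero]
    exact hp
  · have hrel : aeval ![(X 0 + X 1 : MvPolynomial (Fin 3) K), X 0 * X 1, X 2 ^ 2,
        (X 0 - X 1) * X 2] (X 3 ^ 2 - X 2 * (X 0 ^ 2 - 4 * X 1) : MvPolynomial (Fin 4) K) = 0 := by
      simp only [map_mul, map_sub, map_pow, map_ofNat, aeval_X, Matrix.cons_val]
      ring
    apply le_antisymm
    · intro f hf
      obtain ⟨g, h, k, rfl⟩ := exists_normal_form f
      rw [RingHom.mem_ker, map_add, map_mul _ _ k, hrel, zero_mul, add_zero] at hf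
      obtain ⟨rfl, rfl⟩ := normal_form_unique h2' g h hf
      simpa using Ideal.mul_mem_right k _ (Ideal.mem_span_singleton_self _)
    · rw [Ideal.span_singleton_le_iff_mem, RingHom.mem_ker]
      exact hrel
end

section
/- Let the symmetric group S_d act on S = K[X₁,…,X_d,W] by permuting the variables X_i and acting on W through the sign character (σ sends W to sgn(σ)·W). Then the invariant ring S^{S_d} equals K[E₁,…,E_d][W², DW], where E_i are the elementary symmetric polynomials and D = ∏_{i<j}(X_i − X_j) is the Vandermonde determinant. -/
/-!
Write `S = K[X₁,…,X_d, W]` as a polynomial ring in `W` over `R = K[X₁,…,X_d]`, so that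
`f = ∑ₖ cₖ Wᵏ` with unique `cₖ ∈ R`. The permutation `σ` sends `cₖ` to `sgn(σ)ᵏ σ(cₖ)`, hence `f` is
invariant iff `σ(cₖ) = sgn(σ)ᵏ cₖ` for all `k` and `σ`: the even coefficients are symmetric and
the odd ones are semi-invariants of the sign character.

An antisymmetric polynomial vanishes when `X_j` is replaced by `X_i` (here `2 ≠ 0` is used), so it is
divisible by `X_i - X_j`. These linear forms are pairwise non-associated primes, hence their
product `D` divides it, and the quotient is symmetric because `D` is itself antisymmetric
(`exists_symmetric_of_antisymmetric`). By the fundamental theorem on symmetric polynomials, each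
term `cₖ Wᵏ` is then `s (W²)ᵐ` or `s (D W) (W²)ᵐ` with `s ∈ K[E₁,…,E_d]`.
-/

open MvPolynomial

/-- Substituting `X_i` for `X_j` does not change a polynomial modulo `X_i - X_j`. -/
lemma X_sub_X_dvd_sub_aeval {K : Type*} [Field K] {d : ℕ} (i j : Fin d)
    (p : MvPolynomial (Fin d) K) :
    (X i - X j) ∣ p - aeval (Function.update X j (X i)) p := by
  have h : (Ideal.Quotient.mkₐ K (Ideal.span {(X i - X j : MvPolynomial (Fin d) K)})).comp
      (aeval (Function.update X j (X i))) = Ideal.Quotient.mkₐ K _ := by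
    refine MvPolynomial.algHom_ext fun k => ?_
    by_cases hk : k = j
    · subst hk
      simp only [AlgHom.comp_apply, aeval_X, Function.update_self, Ideal.Quotient.mkₐ_eq_mk]
      exact Ideal.Quotient.eq.2 (Ideal.mem_span_singleton_self _)
    · simp [hk]
  rw [← Ideal.mem_span_singleton]
  exact Ideal.Quotient.eq.1 (DFunLike.congr_fun h p).symm

lemma X_sub_X_dvd_iff {K : Type*} [Field K] {d : ℕ} (i j : Fin d)
    (p : MvPolynomial (Fin d) K) :
    (X i - X j) ∣ p ↔
      aeval (Function.update X j (X i) : Fin d → MvPolynomial (Fin d) K) p = 0 := by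
  constructor
  · rintro ⟨q, rfl⟩
    by_cases h : i = j
    · subst h
      simp
    · simp [h]
  · intro h
    have h' := X_sub_X_dvd_sub_aeval i j p
    rwa [h, sub_zero] at h'

lemma prime_X_sub_X {K : Type*} [Field K] {d : ℕ} {i j : Fin d} (hij : i ≠ j) :
    Prime (X i - X j : MvPolynomial (Fin d) K) := by
  refine ⟨sub_ne_zero.2 fun h => hij (X_injective h), fun h => ?_, fun a b h => ?_⟩
  · have := (X_sub_X_dvd_iff i j _).1 (isUnit_iff_dvd_one.1 h)
    simp at this
  · simpa only [X_sub_X_dvd_iff, map_mul, mul_eq_zero] using h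

/-- The Vandermonde polynomial `D = ∏_{i<j} (X_i - X_j)`. -/
noncomputable def vanderPoly (K : Type*) [Field K] (d : ℕ) : MvPolynomial (Fin d) K :=
  ∏ p ∈ Finset.univ.filter (fun p : Fin d × Fin d => p.1 < p.2), (X p.1 - X p.2)

lemma vanderPoly_ne_zero (K : Type*) [Field K] (d : ℕ) : vanderPoly K d ≠ 0 :=
  Finset.prod_ne_zero_iff.2 fun _ hp => (prime_X_sub_X (Finset.mem_filter.1 hp).2.ne).ne_zero

lemma rename_vanderPoly {K : Type*} [Field K] {d : ℕ} (σ : Equiv.Perm (Fin d)) :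
    rename σ (vanderPoly K d) = C ((σ.sign : ℤ) : K) * vanderPoly K d := by
  have h (f : Fin d → Fin d → MvPolynomial (Fin d) K) :
      ∏ p ∈ Finset.univ.filter (fun p : Fin d × Fin d => p.1 < p.2), f p.1 p.2
        = ∏ i, ∏ j ∈ Finset.Ioi i, f i j := by
    rw [Finset.prod_filter, Fintype.prod_prod_type]
    refine Finset.prod_congr rfl fun i _ => ?_
    rw [← Finset.prod_filter]
    refine Finset.prod_congr (by ext; simp) fun _ _ => rfl
  have key := σ.prod_Ioi_comp_eq_sign_mul_prod
    (f := fun i j : Fin d => (X i - X j : MvPolynomial (Fin d) K)) (fun i j => by ring)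
  rw [← h (fun i j => X i - X j), ← h (fun i j => X (σ i) - X (σ j))] at key
  simpa [vanderPoly] using key

lemma vanderPoly_dvd {K : Type*} [Field K] [CharZero K] {d : ℕ} {c : MvPolynomial (Fin d) K}
    (hc : ∀ σ : Equiv.Perm (Fin d), rename σ c = C ((σ.sign : ℤ) : K) * c) :
    vanderPoly K d ∣ c := by
  refine Finset.prod_dvd_of_isRelPrime ?_ ?_
  · rintro ⟨i, j⟩ hij ⟨k, l⟩ hkl hne
    simp only [Finset.coe_filter, Finset.mem_univ, true_and, Set.mem_ofPred_eq] at hij hkl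
    refine (prime_X_sub_X hij.ne).irreducible.isRelPrime_iff_not_dvd.2 fun h => hne ?_
    rw [X_sub_X_dvd_iff, map_sub, aeval_X, aeval_X, sub_eq_zero] at h
    simp only [Function.update_apply] at h
    split_ifs at h <;> have := X_injective h <;> grind
  · rintro ⟨i, j⟩ hij
    simp only [Finset.mem_filter, Finset.mem_univ, true_and] at hij
    rw [X_sub_X_dvd_iff]
    have h := congrArg (aeval (Function.update X j (X i) : Fin d → MvPolynomial (Fin d) K))
      (hc (Equiv.swap i j))
    rw [aeval_rename] at h
    -- `X_i` and `X_j` have the same image, so the transposition is invisible to the substitution.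
    have h2 : (Function.update X j (X i) : Fin d → MvPolynomial (Fin d) K) ∘ Equiv.swap i j
        = Function.update X j (X i) := by
      funext k
      simp only [Function.comp_apply, Function.update_apply, Equiv.swap_apply_def]
      split_ifs <;> simp_all
    rw [h2, Equiv.Perm.sign_swap hij.ne] at h
    simpa [self_eq_neg] using h

/-- The semi-invariants of the sign character are the products of `D` with symmetric
polynomials. -/
lemma exists_symmetric_of_antisymmetric {K : Type*} [Field K] [CharZero K] {d : ℕ}
    {c : MvPolynomial (Fin d) K}
    (hc : ∀ σ : Equiv.Perm (Fin d), rename σ c = C ((σ.sign : ℤ) : K) * c) :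
    ∃ s : MvPolynomial (Fin d) K, s.IsSymmetric ∧ c = vanderPoly K d * s := by
  obtain ⟨s, rfl⟩ := vanderPoly_dvd hc
  refine ⟨s, fun σ => ?_, rfl⟩
  have h := hc σ
  rw [map_mul, rename_vanderPoly, ← mul_assoc] at h
  refine mul_left_cancel₀ (mul_ne_zero ?_ (vanderPoly_ne_zero K d)) h
  rcases Int.units_eq_one_or σ.sign with h | h <;> simp [h]

lemma rename_mem_adjoin_esymm {K : Type*} [Field K] {d : ℕ} {s : MvPolynomial (Fin d) K}
    (hs : s.IsSymmetric) :
    rename (Sum.inl : Fin d → Fin d ⊕ Unit) s ∈ Algebra.adjoin K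
      (Set.range fun i : Fin d =>
        rename (Sum.inl : Fin d → Fin d ⊕ Unit) (esymm (Fin d) K ((i : ℕ) + 1))) := by
  obtain ⟨p, hp⟩ := esymmAlgHom_surjective (σ := Fin d) (n := d) K (by simp) ⟨s, hs⟩
  have hp' := congrArg Subtype.val hp
  rw [esymmAlgHom_apply] at hp'
  simp only at hp'
  rw [← hp', Algebra.adjoin_range_eq_range_aeval]
  exact ⟨p, by rw [AlgHom.toRingHom_eq_coe, RingHom.coe_coe, ← AlgHom.comp_apply, comp_aeval]⟩

/-- `K[X₁,…,X_d, W] → K[X₁,…,X_d][W]`. -/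
noncomputable def toPolyW (K : Type*) [Field K] (d : ℕ) :
    MvPolynomial (Fin d ⊕ Unit) K →ₐ[K] Polynomial (MvPolynomial (Fin d) K) :=
  aeval (Sum.elim (fun i => Polynomial.C (X i)) (fun _ => Polynomial.X))

/-- Every polynomial is recovered from its coefficients with respect to `W`. -/
lemma eq_sum_toPolyW {K : Type*} [Field K] {d : ℕ} (f : MvPolynomial (Fin d ⊕ Unit) K) :
    f = ∑ k ∈ (toPolyW K d f).support,
      rename Sum.inl ((toPolyW K d f).coeff k) * X (Sum.inr ()) ^ k := by
  have h : (Polynomial.eval₂RingHom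
      (rename (R := K) (Sum.inl : Fin d → Fin d ⊕ Unit)).toRingHom
      (X (Sum.inr ()) : MvPolynomial (Fin d ⊕ Unit) K)).comp
      (toPolyW K d).toRingHom = RingHom.id _ := by
    refine MvPolynomial.ringHom_ext (fun a => ?_) fun k => ?_
    · simp [toPolyW, Polynomial.algebraMap_apply, MvPolynomial.algebraMap_eq]
    · rcases k with k | k <;> simp [toPolyW]
  have h' := (RingHom.congr_fun h f).symm
  simpa [Polynomial.eval₂_eq_sum, Polynomial.sum] using h'

/-- The action of `σ` on `K[X₁,…,X_d, W]`: permute the `X_i`, multiply `W` by the sign. -/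
noncomputable def signAct (K : Type*) [Field K] {d : ℕ} (σ : Equiv.Perm (Fin d)) :
    MvPolynomial (Fin d ⊕ Unit) K →ₐ[K] MvPolynomial (Fin d ⊕ Unit) K :=
  aeval (Sum.elim
    (fun i => (X (Sum.inl (σ i)) : MvPolynomial (Fin d ⊕ Unit) K))
    (fun _ => C (((Equiv.Perm.sign σ : ℤˣ) : ℤ) : K) * X (Sum.inr ())))

lemma signAct_rename_inl {K : Type*} [Field K] {d : ℕ} (σ : Equiv.Perm (Fin d))
    (c : MvPolynomial (Fin d) K) :
    signAct K σ (rename Sum.inl c) = rename Sum.inl (rename σ c) := by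
  have h : (signAct K σ).comp (rename Sum.inl) = (rename Sum.inl).comp (rename σ) :=
    MvPolynomial.algHom_ext fun i => by simp [signAct]
  exact DFunLike.congr_fun h c

lemma signAct_W {K : Type*} [Field K] {d : ℕ} (σ : Equiv.Perm (Fin d)) :
    signAct K σ (X (Sum.inr ())) = C ((σ.sign : ℤ) : K) * X (Sum.inr ()) := by
  simp [signAct]

lemma coeff_toPolyW_signAct {K : Type*} [Field K] {d : ℕ} (σ : Equiv.Perm (Fin d))
    (f : MvPolynomial (Fin d ⊕ Unit) K) (k : ℕ) :
    (toPolyW K d (signAct K σ f)).coeff k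
      = C ((σ.sign : ℤ) : K) ^ k * rename σ ((toPolyW K d f).coeff k) := by
  have h : (toPolyW K d).comp (signAct K σ) =
      (((Polynomial.compRingHom (Polynomial.C (C ((σ.sign : ℤ) : K)) * Polynomial.X)).comp
        (Polynomial.mapRingHom (rename σ : MvPolynomial (Fin d) K →ₐ[K] _).toRingHom)).comp
        (toPolyW K d).toRingHom : _ →+* _) := by
    refine MvPolynomial.ringHom_ext (fun a => ?_) fun i => ?_
    · simp [toPolyW, signAct, Polynomial.algebraMap_apply, MvPolynomial.algebraMap_eq]
    · rcases i with i | i <;> simp [toPolyW, signAct]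
  have h' : (toPolyW K d (signAct K σ f)).coeff k =
      (((toPolyW K d f).map (rename σ : MvPolynomial (Fin d) K →ₐ[K] _).toRingHom).comp
        (Polynomial.C (C ((σ.sign : ℤ) : K)) * Polynomial.X)).coeff k :=
    congrArg (fun p => Polynomial.coeff p k) (RingHom.congr_fun h f)
  rw [h', Polynomial.comp_C_mul_X_coeff]
  simp [mul_comm]

/-- The symmetric group `S_d` acts on `S = K[X₁,…,X_d, W]` by permuting the `X_i` and acting
on `W` through the sign character. The invariant ring is `K[E₁,…,E_d][W², DW]`, where the
`E_i` are the elementary symmetric polynomials and `D = ∏_{i<j}(X_i − X_j)` is the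
Vandermonde determinant. Variables are indexed by `Fin d ⊕ Unit`, the last one being `W`. -/
theorem stmt7 {K : Type*} [Field K] [CharZero K] (d : ℕ) :
    {f : MvPolynomial (Fin d ⊕ Unit) K |
        ∀ σ : Equiv.Perm (Fin d),
          aeval (Sum.elim
              (fun i => (X (Sum.inl (σ i)) : MvPolynomial (Fin d ⊕ Unit) K))
              (fun _ => C (((Equiv.Perm.sign σ : ℤˣ) : ℤ) : K) * X (Sum.inr ()))) f = f} =
      ↑(Algebra.adjoin K
        ((Set.range fun i : Fin d =>
            rename (Sum.inl : Fin d → Fin d ⊕ Unit) (esymm (Fin d) K ((i : ℕ) + 1))) ∪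
          {(X (Sum.inr ()) : MvPolynomial (Fin d ⊕ Unit) K) ^ 2,
            (∏ p ∈ Finset.univ.filter (fun p : Fin d × Fin d => p.1 < p.2),
              (X (Sum.inl p.1) - X (Sum.inl p.2))) * X (Sum.inr ())})) := by
  have hD : (∏ p ∈ Finset.univ.filter (fun p : Fin d × Fin d => p.1 < p.2),
      ((X (Sum.inl p.1) : MvPolynomial (Fin d ⊕ Unit) K) - X (Sum.inl p.2)))
        = rename Sum.inl (vanderPoly K d) := by
    simp [vanderPoly]
  have hsq (σ : Equiv.Perm (Fin d)) :
      (C ((σ.sign : ℤ) : K) : MvPolynomial (Fin d ⊕ Unit) K) ^ 2 = 1 := by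
    rcases Int.units_eq_one_or σ.sign with h | h <;> simp [h]
  rw [hD]
  apply Set.Subset.antisymm
  · intro f hf
    have hf' (σ : Equiv.Perm (Fin d)) : signAct K σ f = f := hf σ
    rw [SetLike.mem_coe, eq_sum_toPolyW f]
    refine Subalgebra.sum_mem _ fun k _ => ?_
    set c := (toPolyW K d f).coeff k with hc
    have hcoeff (σ : Equiv.Perm (Fin d)) : C ((σ.sign : ℤ) : K) ^ k * rename σ c = c := by
      rw [hc, ← coeff_toPolyW_signAct, hf']
    have hsymm {s : MvPolynomial (Fin d) K} (hs : s.IsSymmetric) :=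
      Algebra.adjoin_mono (Set.subset_union_left (t := {(X (Sum.inr ()) :
        MvPolynomial (Fin d ⊕ Unit) K) ^ 2, rename Sum.inl (vanderPoly K d) * X (Sum.inr ())}))
        (rename_mem_adjoin_esymm hs)
    have hW : ∀ m : ℕ, ((X (Sum.inr ()) : MvPolynomial (Fin d ⊕ Unit) K) ^ 2) ^ m ∈ _ := fun m =>
      Subalgebra.pow_mem _ (Algebra.subset_adjoin (R := K) (Set.mem_union_right
        (Set.range fun i : Fin d =>
          rename (Sum.inl : Fin d → Fin d ⊕ Unit) (esymm (Fin d) K ((i : ℕ) + 1)))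
        (Set.mem_insert (X (Sum.inr ()) ^ 2) {rename Sum.inl (vanderPoly K d) * X (Sum.inr ())}))) m
    obtain ⟨m, rfl | rfl⟩ := Nat.even_or_odd' k
    · rw [pow_mul]
      refine Subalgebra.mul_mem _ (hsymm fun σ => ?_) (hW m)
      have h := hcoeff σ
      rcases Int.units_eq_one_or σ.sign with hs | hs <;> simpa [hs, pow_mul] using h
    · obtain ⟨s, hs, hcs⟩ := exists_symmetric_of_antisymmetric (c := c) fun σ => by
        have h := hcoeff σ
        rcases Int.units_eq_one_or σ.sign with hs | hs
        · simpa [hs] using h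
        · have h' : -rename σ c = c := by simpa [hs, pow_succ, pow_mul] using h
          simpa [hs] using neg_eq_iff_eq_neg.1 h'
      rw [hcs, map_mul, show ∀ a b w : MvPolynomial (Fin d ⊕ Unit) K,
        a * b * w ^ (2 * m + 1) = b * (a * w) * (w ^ 2) ^ m from fun a b w => by ring]
      refine Subalgebra.mul_mem _ (Subalgebra.mul_mem _ (hsymm hs) ?_) (hW m)
      exact Algebra.subset_adjoin (by simp)
  · intro f hf σ
    change f ∈ AlgHom.equalizer (signAct K σ) (AlgHom.id K _)
    refine Algebra.adjoin_le ?_ hf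
    rintro _ (⟨i, rfl⟩ | rfl | rfl)
    · change signAct K σ _ = _
      rw [signAct_rename_inl, esymm_isSymmetric]
      rfl
    · change signAct K σ _ = _
      rw [map_pow, signAct_W, mul_pow, hsq, one_mul]
      rfl
    · change signAct K σ _ = _
      rw [map_mul, signAct_rename_inl, signAct_W, rename_vanderPoly, map_mul, rename_C,
        show ∀ a b w : MvPolynomial (Fin d ⊕ Unit) K, a * b * (a * w) = a ^ 2 * (b * w) from
          fun a b w => by ring, hsq, one_mul]
      rfl
end

section
/- Let G be a finite group acting linearly and faithfully on a finite-dimensional K-vector space (equivalently on the polynomial ring S = K[X₁,…,X_d]), with S an integral domain. Then there exists a nonzero G-invariant element f ∈ S such that the induced map S_f ⊗_{R_f} S_f → (K^{|G|}) ⊗ S_f is an isomorphism, where R = S^G; i.e., the action of G on the open locus D(f) ⊆ Spec S is free. In particular, the fraction field extension Q(R) ⊆ Q(S) is Galois with group G. -/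
/-!
Let a finite group `G` act faithfully on a commutative domain `S`, with `R = S^G`.

For `g ≠ h` faithfulness gives `s ∈ S` with `g s ≠ h s`, and `s ⊗ 1 - 1 ⊗ h s` is sent by
`Φ : S ⊗[R] S → (G → S)` to a tuple which vanishes at `h` and is nonzero at `g`. Multiplying over
all `h ≠ g` gives an element whose image is supported at `g` with nonzero value there; multiplying
by a suitable element of `1 ⊗ S` turns that value into one nonzero invariant `f`, the same for all
`g` (`exists_invariant_separating`). Hence `f` kills the cokernel of `Φ`.

For the kernel, write the element with image `f` at `1` as `∑ xᵢ ⊗ yᵢ`. Then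
`f s = ∑ᵢ tr(s xᵢ) yᵢ` for every `s`, where `tr = ∑_g g` takes values in `R`, so traces can be moved
across the tensor sign. This expresses `f w` through `Φ w` alone (`mul_eq_sum_trace`), so `f` kills
the kernel of `Φ`.

For the fraction fields, `R ⊆ S` is a Galois group situation in the sense of `IsGaloisGroup`, which
passes to fraction fields.
-/

open MvPolynomial
open scoped TensorProduct

/-- The invariant subalgebra `S^G` of an action of a group `G` on a `K`-algebra `S`
by `K`-algebra automorphisms. -/
def invarSub {K S : Type*} [CommSemiring K] [CommSemiring S] [Algebra K S]
    {G : Type*} [Group G] (act : G →* (S ≃ₐ[K] S)) : Subalgebra K S where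
  carrier := {s : S | ∀ g : G, act g s = s}
  mul_mem' := fun {a b} ha hb g => by rw [map_mul, ha g, hb g]
  add_mem' := fun {a b} ha hb g => by rw [map_add, ha g, hb g]
  algebraMap_mem' := fun r g => (act g).commutes r

section FreeLocus

variable {K S G : Type*} [Field K] [CommRing S] [Algebra K S] [Group G]
  (act : G →* (S ≃ₐ[K] S))

/-- The action of `g` as an endomorphism of `S` over the invariant ring `S^G`. -/
def actHom (g : G) : S →ₐ[↥(invarSub act)] S :=
  { (act g : S →+* S) with commutes' := fun r => r.2 g }

/-- The canonical map `S ⊗_R S → (G → S)`, `s ⊗ t ↦ (g ↦ g(s) t)`, with `R = S^G`. -/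
noncomputable def galMap : (S ⊗[↥(invarSub act)] S) →ₐ[↥(invarSub act)] (G → S) :=
  AlgHom.pi fun g =>
    Algebra.TensorProduct.lift (actHom act g) (AlgHom.id _ S) fun _ _ => Commute.all _ _

lemma galMap_tmul (s t : S) (g : G) :
    galMap act (s ⊗ₜ[↥(invarSub act)] t) g = act g s * t := by
  exact Algebra.TensorProduct.lift_tmul (actHom act g) (AlgHom.id _ S)
    (fun _ _ => Commute.all _ _) s t

lemma act_act (g h : G) (s : S) : act g (act h s) = act (g * h) s := by
  rw [map_mul]; rfl

variable [Fintype G]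

/-- The trace `∑_g g(s)`, as an element of the invariant ring. -/
def invTrace (s : S) : ↥(invarSub act) :=
  ⟨∑ g, act g s, fun h => by
    simp only [map_sum, act_act]
    exact Fintype.sum_equiv (Equiv.mulLeft h) _ _ fun _ => rfl⟩

/-- The norm `∏_g g(s)` is invariant. -/
lemma act_norm (s : S) (h : G) : act h (∏ g, act g s) = ∏ g, act g s := by
  simp only [map_prod, act_act]
  exact Fintype.prod_equiv (Equiv.mulLeft h) _ _ fun _ => rfl

/-- Some nonzero invariant `f` is such that all tuples `f · δ_g` lie in the image of
`S ⊗_R S → (G → S)`. -/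
lemma exists_invariant_separating [IsDomain S] [DecidableEq G] (hfaith : Function.Injective act) :
    ∃ f : S, f ≠ 0 ∧ (∀ g, act g f = f) ∧
      ∀ g, ∃ e : S ⊗[↥(invarSub act)] S, ∀ h, galMap act e h = if h = g then f else 0 := by
  have hsep : ∀ g h : G, ∃ s : S, h ≠ g → act g s ≠ act h s := by
    intro g h
    by_cases hgh : h = g
    · exact ⟨0, fun hne => absurd hgh hne⟩
    · by_contra! hcon
      exact hgh (hfaith (AlgEquiv.ext fun s => ((hcon s).2).symm))
  choose s hs using hsep
  -- The value at `g` of the product of the separating tensors attached to `g`.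
  let F : G → S := fun g => ∏ h ∈ Finset.univ.erase g, (act g (s g h) - act h (s g h))
  have hF : ∀ g, F g ≠ 0 := fun g => Finset.prod_ne_zero_iff.mpr fun h hh =>
    sub_ne_zero.mpr (hs g h (Finset.ne_of_mem_erase hh))
  let P : S := ∏ g, F g
  have hP : P ≠ 0 := Finset.prod_ne_zero_iff.mpr fun g _ => hF g
  refine ⟨∏ g, act g P, Finset.prod_ne_zero_iff.mpr fun g _ => ?_, act_norm act P, fun g => ?_⟩
  · simpa using hP
  have hdvd : F g ∣ ∏ g, act g P := by
    refine (Finset.dvd_prod_of_mem F (Finset.mem_univ g)).trans ?_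
    have := Finset.dvd_prod_of_mem (fun g => act g P) (Finset.mem_univ 1)
    simpa using this
  obtain ⟨c, hc⟩ := hdvd
  refine ⟨(∏ h ∈ Finset.univ.erase g, (s g h ⊗ₜ 1 - 1 ⊗ₜ act h (s g h))) * (1 ⊗ₜ c), fun k => ?_⟩
  rw [map_mul, map_prod, Pi.mul_apply, Finset.prod_apply]
  simp only [map_sub, Pi.sub_apply, galMap_tmul, map_one, one_mul, mul_one]
  split_ifs with hk
  · subst hk
    exact hc.symm
  · rw [Finset.prod_eq_zero (Finset.mem_erase.mpr ⟨hk, Finset.mem_univ k⟩) (sub_self _), zero_mul]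

/-- If `∑ xᵢ ⊗ yᵢ` has image `f · δ_1`, then `f w` is determined by the image of `w`: for
`w = t ⊗ s` the `i`-th summand on the right is `t tr(s xᵢ) ⊗ yᵢ = t ⊗ tr(s xᵢ) yᵢ`, and
`∑ᵢ tr(s xᵢ) yᵢ = f s`. -/
lemma mul_eq_sum_trace [DecidableEq G] {f : S} (hf : ∀ g, act g f = f) (T : Finset (S × S))
    (hT : ∀ h, galMap act (∑ i ∈ T, i.1 ⊗ₜ i.2) h = if h = 1 then f else 0)
    (w : S ⊗[↥(invarSub act)] S) :
    (f ⊗ₜ[↥(invarSub act)] (1 : S)) * w =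
      ∑ i ∈ T, (∑ g, act g (galMap act w g⁻¹ * i.1)) ⊗ₜ[↥(invarSub act)] i.2 := by
  induction w with
  | zero => simp
  | add a b ha hb =>
    rw [mul_add, ha, hb, ← Finset.sum_add_distrib]
    refine Finset.sum_congr rfl fun i _ => ?_
    rw [← TensorProduct.add_tmul, ← Finset.sum_add_distrib]
    simp [add_mul]
  | tmul t s =>
    have hsum : ∑ i ∈ T, (invTrace act (s * i.1) : S) * i.2 = f * s := by
      have h1 : ∀ g, act g s * ∑ i ∈ T, act g i.1 * i.2 = if g = 1 then f * s else 0 := by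
        intro g
        have h := hT g
        rw [map_sum, Finset.sum_apply] at h
        simp only [galMap_tmul] at h
        rw [h]
        split_ifs with hg
        · subst hg; simp [mul_comm]
        · simp
      calc ∑ i ∈ T, (invTrace act (s * i.1) : S) * i.2
          = ∑ g, act g s * ∑ i ∈ T, act g i.1 * i.2 := by
            simp only [invTrace, map_mul, Finset.sum_mul, Finset.mul_sum, mul_assoc]
            exact Finset.sum_comm
        _ = f * s := by simp [h1]
    have hterm : ∀ x : S, ∑ g, act g (galMap act (t ⊗ₜ s) g⁻¹ * x) = invTrace act (s * x) • t := by
      intro x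
      simp only [galMap_tmul, map_mul, act_act, Subalgebra.smul_def, smul_eq_mul, invTrace,
        Finset.sum_mul]
      refine Finset.sum_congr rfl fun g _ => ?_
      rw [← map_mul, mul_inv_cancel, map_one, AlgEquiv.one_apply]
      ring
    simp only [hterm, TensorProduct.smul_tmul, ← TensorProduct.tmul_sum]
    simp only [Subalgebra.smul_def, smul_eq_mul, hsum]
    rw [Algebra.TensorProduct.tmul_mul_tmul, one_mul]
    exact TensorProduct.smul_tmul (⟨f, hf⟩ : ↥(invarSub act)) t s

end FreeLocus

/-- A finite group acting faithfully on a domain `S` is the Galois group of the fraction field of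
`S` over that of `S^G`. -/
lemma isGalois_fractionRing {K S G : Type*} [Field K] [CommRing S] [IsDomain S] [Algebra K S]
    [Group G] [Finite G] (act : G →* (S ≃ₐ[K] S)) (hfaith : Function.Injective act)
    [Algebra (FractionRing ↥(invarSub act)) (FractionRing S)]
    (hcompat : ∀ r : ↥(invarSub act),
      algebraMap (FractionRing ↥(invarSub act)) (FractionRing S)
        (algebraMap ↥(invarSub act) (FractionRing ↥(invarSub act)) r) =
      algebraMap S (FractionRing S) (r : S)) :
    IsGalois (FractionRing ↥(invarSub act)) (FractionRing S) ∧
      Nonempty (G ≃* (FractionRing S ≃ₐ[FractionRing ↥(invarSub act)] FractionRing S)) := by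
  let _ : MulSemiringAction G S := MulSemiringAction.compHom S act
  have hsmul : ∀ (g : G) (s : S), g • s = act g s := fun _ _ => rfl
  have : IsGaloisGroup G ↥(invarSub act) S :=
    { faithful := ⟨fun h => hfaith (AlgEquiv.ext h)⟩
      commutes := ⟨fun g r s => by
        simp only [hsmul, Subalgebra.smul_def, smul_eq_mul, map_mul]
        rw [r.2 g]⟩
      isInvariant := ⟨fun b hb => ⟨⟨b, hb⟩, rfl⟩⟩ }
  have : IsScalarTower ↥(invarSub act) (FractionRing ↥(invarSub act)) (FractionRing S) :=
    IsScalarTower.of_algebraMap_eq fun r => (hcompat r).symm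
  let _ := IsFractionRing.mulSemiringAction G S (FractionRing S)
  have : IsGaloisGroup G (FractionRing ↥(invarSub act)) (FractionRing S) :=
    IsGaloisGroup.to_isFractionRing G ↥(invarSub act) S _ _
  have : FaithfulSMul (FractionRing ↥(invarSub act)) (FractionRing S) :=
    (faithfulSMul_iff_algebraMap_injective _ _).mpr (RingHom.injective _)
  exact ⟨IsGaloisGroup.isGalois G _ _, ⟨IsGaloisGroup.mulEquivAlgEquiv G _ _⟩⟩

/-- A finite group `G` acting linearly and faithfully on `S = K[X₁,…,X_d]` acts freely on a
nonempty invariant open locus: there is a nonzero invariant `f` such that the canonical map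
`S ⊗_R S → K^{|G|} ⊗ S = (G → S)`, `s ⊗ t ↦ (g ↦ g(s)·t)` (with `R = S^G`), becomes an
isomorphism after inverting `f`.  In particular the fraction field extension
`Q(R) ⊆ Q(S)` is Galois with Galois group `G` (stated for any compatible algebra structure
on the fraction fields). -/
theorem stmt19 {K : Type*} [Field K] {G : Type*} [Group G] [Fintype G] (d : ℕ)
    (act : G →* (MvPolynomial (Fin d) K ≃ₐ[K] MvPolynomial (Fin d) K))
    (hfaith : Function.Injective act)
    (hlin : ∀ (g : G) (i : Fin d), ((act g) (X i)).IsHomogeneous 1) :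
    (∃ Φ : (MvPolynomial (Fin d) K ⊗[↥(invarSub act)] MvPolynomial (Fin d) K) →ₗ[↥(invarSub act)]
        (G → MvPolynomial (Fin d) K),
      (∀ (s t : MvPolynomial (Fin d) K) (g : G),
          Φ (s ⊗ₜ[↥(invarSub act)] t) g = act g s * t) ∧
      ∃ f : MvPolynomial (Fin d) K, f ≠ 0 ∧ (∀ g : G, act g f = f) ∧
        (∀ y : G → MvPolynomial (Fin d) K,
          ∃ (n : ℕ) (x : MvPolynomial (Fin d) K ⊗[↥(invarSub act)] MvPolynomial (Fin d) K),
            Φ x = fun g => f ^ n * y g) ∧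
        (∀ x : MvPolynomial (Fin d) K ⊗[↥(invarSub act)] MvPolynomial (Fin d) K,
          Φ x = 0 →
            ∃ n : ℕ, ((f ^ n) ⊗ₜ[↥(invarSub act)] (1 : MvPolynomial (Fin d) K)) * x = 0)) ∧
    (∀ (instFA : Algebra (FractionRing ↥(invarSub act))
          (FractionRing (MvPolynomial (Fin d) K))),
      (∀ r : ↥(invarSub act),
        @algebraMap _ _ _ _ instFA
            (algebraMap (↥(invarSub act)) (FractionRing ↥(invarSub act)) r) =
          algebraMap (MvPolynomial (Fin d) K) (FractionRing (MvPolynomial (Fin d) K))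
            (r : MvPolynomial (Fin d) K)) →
      @IsGalois (FractionRing ↥(invarSub act)) _
          (FractionRing (MvPolynomial (Fin d) K)) _ instFA ∧
      Nonempty (G ≃*
        (@AlgEquiv (FractionRing ↥(invarSub act))
          (FractionRing (MvPolynomial (Fin d) K))
          (FractionRing (MvPolynomial (Fin d) K)) _ _ _ instFA instFA))) := by
  classical
  refine ⟨⟨(galMap act).toLinearMap, galMap_tmul act, ?_⟩,
    fun instFA hcompat => isGalois_fractionRing act hfaith hcompat⟩
  obtain ⟨f, hf0, hf, he⟩ := exists_invariant_separating act hfaith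
  refine ⟨f, hf0, hf, fun y => ?_, fun w hw => ?_⟩
  · choose e he using he
    refine ⟨1, ∑ g, e g * (1 ⊗ₜ y g), funext fun h => ?_⟩
    rw [AlgHom.toLinearMap_apply, map_sum, Finset.sum_apply]
    simp [galMap_tmul, he]
  · obtain ⟨e, he⟩ := he 1
    obtain ⟨T, rfl⟩ := TensorProduct.exists_finset e
    rw [AlgHom.toLinearMap_apply] at hw
    refine ⟨1, ?_⟩
    rw [pow_one, mul_eq_sum_trace act hf T he w, hw]
    simp
end
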